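/- Let K ⊂ ℝ^d be compact, F : P_2(K) → ℝ lower semicontinuous and bounded below, T > 0, and for each τ > 0 let (μ_k^τ)_k be an SW-JKO sequence started at a fixed μ_0 ∈ P_2(K), with piecewise constant interpolation μ^τ : [0,T] → P_2(K). Then there exist a sequence τ_n → 0 and a curve μ : [0,T] → P_2(K), 1/2-Hölder continuous with respect to SW_2, such that for every t ∈ [0,T], μ^{τ_n}(t) converges to μ(t) in the metric SW_2, uniformly in t. -/

import Mathlib

open MeasureTheory ENNReal Metric Filter
open scoped RealInnerProductSpace NNReal

noncomputable section

/-- `ℝ^d` as a Euclidean space. -/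
abbrev Ed (d : ℕ) : Type := EuclideanSpace ℝ (Fin d)

/-- `π` is a coupling of `μ` and `ν`. -/
def IsCoupling {E : Type*} [MeasurableSpace E] (π : Measure (E × E)) (μ ν : Measure E) : Prop :=
  π.map Prod.fst = μ ∧ π.map Prod.snd = ν

/-- Squared 2-Wasserstein distance. -/
def W2sq {E : Type*} [MeasurableSpace E] [NormedAddCommGroup E] (μ ν : Measure E) : ℝ≥0∞ :=
  ⨅ (π : Measure (E × E)) (_ : IsCoupling π μ ν), ∫⁻ p, (‖p.1 - p.2‖₊ : ℝ≥0∞) ^ 2 ∂π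

/-- The uniform probability measure on the unit sphere `S^{d-1}`. -/
def unifSphere (d : ℕ) : Measure (sphere (0 : Ed d) 1) :=
  ((volume : Measure (Ed d)).toSphere Set.univ)⁻¹ • (volume : Measure (Ed d)).toSphere

/-- Projection `P^θ(x) = ⟨x, θ⟩`. -/
def proj {d : ℕ} (θ : Ed d) (x : Ed d) : ℝ := ⟪x, θ⟫

/-- Squared Sliced-Wasserstein distance. -/
def SW2sq {d : ℕ} (μ ν : Measure (Ed d)) : ℝ≥0∞ :=
  ∫⁻ θ : sphere (0 : Ed d) 1,
    W2sq (μ.map (proj (θ : Ed d))) (ν.map (proj (θ : Ed d))) ∂(unifSphere d)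

/-- Sliced-Wasserstein distance. -/
def SW2 {d : ℕ} (μ ν : Measure (Ed d)) : ℝ := Real.sqrt (SW2sq μ ν).toReal

/-- Finite second moment. -/
def FiniteSecondMoment {d : ℕ} (μ : Measure (Ed d)) : Prop :=
  ∫⁻ x, (‖x‖₊ : ℝ≥0∞) ^ 2 ∂μ < ∞

/-- `μ ∈ P_2(K)`: probability measure supported in `K` with finite second moment. -/
def MemP2 {d : ℕ} (K : Set (Ed d)) (μ : Measure (Ed d)) : Prop :=
  IsProbabilityMeasure μ ∧ μ Kᶜ = 0 ∧ FiniteSecondMoment μ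

/-!
Gluing couplings and Minkowski's inequality make `SW2` a pseudometric on `P_2(K)`. On the line, weak
convergence forces almost everywhere convergence of the quantile functions, which couple the
measures; for measures supported in a common bounded set, weak convergence therefore implies `W2`
convergence of every projection, and `SW2` convergence by dominated convergence. So the identity
from the weakly compact set `P_2(K)` to `(P_2(K), SW2)` is continuous, and the latter is compact.

Comparing `μ_{k+1}` with `μ_k` in the minimization bounds `SW2(μ_k, μ_{k+1})²` by `2τ` times the
drop of `F`. Telescoping and Cauchy–Schwarz turn this into a `1/2`-Hölder bound for the
interpolations, up to an error in time of size `τ`. A diagonal subsequence converges on a countable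
dense set of times, and the asymptotic equicontinuity extends the convergence to all times,
uniformly on bounded sets.
-/

open ProbabilityTheory Topology Uniformity

theorem eLpNorm_two_sq {α ε : Type*} [MeasurableSpace α] [ENorm ε] (f : α → ε) (m : Measure α) :
    eLpNorm f 2 m ^ 2 = ∫⁻ a, ‖f a‖ₑ ^ 2 ∂m := by
  simpa using eLpNorm_nnreal_pow_eq_lintegral (μ := m) (f := f) (p := 2) two_ne_zero

theorem tendsto_eLpNorm_zero_of_enorm_le {α ε ι : Type*} [MeasurableSpace α]
    {m : Measure α} [IsFiniteMeasure m] [TopologicalSpace ε] [ContinuousENorm ε]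
    {l : Filter ι} [l.IsCountablyGenerated]
    {p C : ℝ≥0∞} {f : ι → α → ε} (hp : p ≠ ∞) (hC : C ≠ ∞)
    (hf : ∀ᶠ i in l, AEStronglyMeasurable (f i) m) (hbound : ∀ᶠ i in l, ∀ᵐ a ∂m, ‖f i a‖ₑ ≤ C)
    (hlim : ∀ᵐ a ∂m, Tendsto (fun i => ‖f i a‖ₑ) l (𝓝 0)) :
    Tendsto (fun i => eLpNorm (f i) p m) l (𝓝 0) := by
  rcases eq_or_ne p 0 with rfl | hp0
  · simpa using tendsto_const_nhds
  have hpos : 0 < p.toReal := ENNReal.toReal_pos hp0 hp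
  have hint : Tendsto (fun i => ∫⁻ a, ‖f i a‖ₑ ^ p.toReal ∂m) l (𝓝 (∫⁻ _, 0 ∂m)) := by
    refine tendsto_lintegral_filter_of_dominated_convergence' (fun _ => C ^ p.toReal) ?_ ?_ ?_ ?_
    · filter_upwards [hf] with i hi
      exact hi.enorm.pow_const _
    · filter_upwards [hbound] with i hi
      filter_upwards [hi] with a ha
      gcongr
    · rw [lintegral_const]
      exact mul_ne_top (rpow_ne_top_of_nonneg hpos.le hC) (measure_ne_top _ _)
    · filter_upwards [hlim] with a ha
      simpa [hpos] using ha.ennrpow_const p.toReal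
  simp only [eLpNorm_eq_lintegral_rpow_enorm_toReal hp0 hp]
  simpa [hpos] using hint.ennrpow_const (1 / p.toReal)

/-! ### The Wasserstein distance and its triangle inequality -/

section Wasserstein

theorem exists_measure_map_prod_of_fst_eq {α β γ : Type*} [MeasurableSpace α]
    [MeasurableSpace β] [StandardBorelSpace β] [Nonempty β]
    [MeasurableSpace γ] [StandardBorelSpace γ] [Nonempty γ]
    (π₁ : Measure (α × β)) (π₂ : Measure (α × γ)) [IsFiniteMeasure π₁] [IsFiniteMeasure π₂]
    (h : π₁.fst = π₂.fst) :
    ∃ ρ : Measure (α × β × γ),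
      ρ.map (Prod.map id Prod.fst) = π₁ ∧ ρ.map (Prod.map id Prod.snd) = π₂ := by
  refine ⟨π₁.fst ⊗ₘ (π₁.condKernel ×ₖ π₂.condKernel), ?_, ?_⟩
  · rw [← Measure.compProd_map measurable_fst, ← Kernel.fst_eq, Kernel.fst_prod,
      Measure.disintegrate]
  · rw [← Measure.compProd_map measurable_snd, ← Kernel.snd_eq, Kernel.snd_prod, h,
      Measure.disintegrate]

variable {E : Type*} [MeasurableSpace E] {μ ν : Measure E}

theorem IsCoupling.isFiniteMeasure_left [IsFiniteMeasure μ] {π : Measure (E × E)}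
    (h : IsCoupling π μ ν) : IsFiniteMeasure π := by
  have : IsFiniteMeasure (π.map Prod.fst) := h.1 ▸ inferInstance
  exact Measure.isFiniteMeasure_of_map measurable_fst.aemeasurable

theorem IsCoupling.of_map {Ω : Type*} [MeasurableSpace Ω] {P : Measure Ω} {f g : Ω → E}
    (hf : AEMeasurable f P) (hg : AEMeasurable g P) :
    IsCoupling (P.map fun ω => (f ω, g ω)) (P.map f) (P.map g) :=
  ⟨Measure.fst_map_prodMk₀ hg, Measure.snd_map_prodMk₀ hf⟩

theorem IsCoupling.symm {π : Measure (E × E)} (h : IsCoupling π μ ν) :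
    IsCoupling (π.map Prod.swap) ν μ :=
  ⟨(Measure.fst_map_swap (ρ := π)).trans h.2, (Measure.snd_map_swap (ρ := π)).trans h.1⟩

variable [NormedAddCommGroup E]

/-- The 2-Wasserstein distance as an extended nonnegative real, written with `L²` seminorms of
couplings so that Minkowski's inequality applies; its square is `W2sq`. -/
def W2 (μ ν : Measure E) : ℝ≥0∞ :=
  ⨅ (π : Measure (E × E)) (_ : IsCoupling π μ ν), eLpNorm (fun p => p.1 - p.2) 2 π

theorem W2_sq (μ ν : Measure E) : W2 μ ν ^ 2 = W2sq μ ν := by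
  have hpow := (ENNReal.orderIsoRpow 2 two_pos).map_iInf₂
    fun (π : Measure (E × E)) (_ : IsCoupling π μ ν) => eLpNorm (fun p => p.1 - p.2) 2 π
  simp only [ENNReal.orderIsoRpow_apply, ENNReal.rpow_two] at hpow
  rw [W2, W2sq, hpow]
  congr! with π _
  exact eLpNorm_two_sq _ π

theorem IsCoupling.W2_le {π : Measure (E × E)} (h : IsCoupling π μ ν) :
    W2 μ ν ≤ eLpNorm (fun p => p.1 - p.2) 2 π :=
  iInf₂_le π h

variable [BorelSpace E] [SecondCountableTopology E]

theorem W2_map_map_le {Ω : Type*} [MeasurableSpace Ω] {P : Measure Ω} {f g : Ω → E}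
    (hf : AEMeasurable f P) (hg : AEMeasurable g P) :
    W2 (P.map f) (P.map g) ≤ eLpNorm (f - g) 2 P := by
  refine (IsCoupling.of_map hf hg).W2_le.trans_eq ?_
  exact eLpNorm_map_measure (by fun_prop) (hf.prodMk hg)

theorem W2_self (μ : Measure E) : W2 μ μ = 0 := by
  simpa using W2_map_map_le (P := μ) aemeasurable_id aemeasurable_id

theorem W2_comm (μ ν : Measure E) : W2 μ ν = W2 ν μ := by
  suffices h : ∀ μ ν : Measure E, W2 μ ν ≤ W2 ν μ from (h μ ν).antisymm (h ν μ)
  refine fun μ ν => le_iInf₂ fun π hπ => hπ.symm.W2_le.trans_eq ?_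
  rw [eLpNorm_map_measure (by fun_prop) measurable_swap.aemeasurable]
  exact eLpNorm_sub_comm _ _ _ _

theorem W2_triangle [StandardBorelSpace E] (μ ν ρ : Measure E) [IsFiniteMeasure ν] :
    W2 μ ρ ≤ W2 μ ν + W2 ν ρ := by
  rw [W2_comm μ ν]
  conv_rhs => rw [W2, W2]
  refine ENNReal.le_iInf₂_add_iInf₂ fun π₁ hπ₁ π₂ hπ₂ => ?_
  have := hπ₁.isFiniteMeasure_left
  have := hπ₂.isFiniteMeasure_left
  obtain ⟨γ, hγ₁, hγ₂⟩ := exists_measure_map_prod_of_fst_eq π₁ π₂ (hπ₁.1.trans hπ₂.1.symm)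
  have hμ : γ.map (fun p => p.2.1) = μ := by
    rw [← hπ₁.2, ← hγ₁, Measure.map_map (by fun_prop) (by fun_prop)]
    rfl
  have hρ : γ.map (fun p => p.2.2) = ρ := by
    rw [← hπ₂.2, ← hγ₂, Measure.map_map (by fun_prop) (by fun_prop)]
    rfl
  have hcost₁ : eLpNorm (fun p : E × E × E => p.1 - p.2.1) 2 γ
      = eLpNorm (fun p => p.1 - p.2) 2 π₁ := by
    rw [← hγ₁, eLpNorm_map_measure (by fun_prop) (by fun_prop)]
    rfl
  have hcost₂ : eLpNorm (fun p : E × E × E => p.1 - p.2.2) 2 γ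
      = eLpNorm (fun p => p.1 - p.2) 2 π₂ := by
    rw [← hγ₂, eLpNorm_map_measure (by fun_prop) (by fun_prop)]
    rfl
  calc W2 μ ρ = W2 (γ.map fun p => p.2.1) (γ.map fun p => p.2.2) := by rw [hμ, hρ]
    _ ≤ eLpNorm (fun p : E × E × E => p.2.1 - p.2.2) 2 γ :=
      W2_map_map_le (by fun_prop) (by fun_prop)
    _ = eLpNorm (fun p : E × E × E => (p.1 - p.2.2) - (p.1 - p.2.1)) 2 γ := by
      congr! 2 with p
      abel
    _ ≤ eLpNorm (fun p : E × E × E => p.1 - p.2.2) 2 γ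
        + eLpNorm (fun p : E × E × E => p.1 - p.2.1) 2 γ :=
      eLpNorm_sub_le (by fun_prop) (by fun_prop) one_le_two
    _ = eLpNorm (fun p => p.1 - p.2) 2 π₁ + eLpNorm (fun p => p.1 - p.2) 2 π₂ := by
      rw [hcost₁, hcost₂, add_comm]

end Wasserstein

/-! ### Quantile coupling on the real line -/

section Quantile

open Set

/-- The quantile function `u ↦ inf {x | u ≤ μ(-∞, x]}` of a measure on the line; it is meaningful
for `u ∈ (0, 1)` only, the infimum being a junk value elsewhere. -/
def quantile (μ : Measure ℝ) (u : ℝ) : ℝ := sInf {x | u ≤ cdf μ x}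

variable {μ : Measure ℝ} {u : ℝ}

theorem quantile_le_iff (hu : u ∈ Ioo 0 1) {x : ℝ} : quantile μ u ≤ x ↔ u ≤ cdf μ x := by
  have hbdd : BddBelow {x | u ≤ cdf μ x} := by
    obtain ⟨y, hy⟩ := ((tendsto_cdf_atBot μ).eventually_lt_const hu.1).exists
    exact ⟨y, fun z hz => (monotone_cdf μ).reflect_lt (hy.trans_le hz) |>.le⟩
  have hne : {x | u ≤ cdf μ x}.Nonempty := by
    obtain ⟨y, hy⟩ := ((tendsto_cdf_atTop μ).eventually_const_lt hu.2).exists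
    exact ⟨y, hy.le⟩
  refine ⟨fun hx => ?_, fun hx => csInf_le hbdd hx⟩
  have hgt : ∀ y ∈ Ioi x, u ≤ cdf μ y := fun y hy => by
    obtain ⟨z, hz, hzy⟩ := exists_lt_of_csInf_lt hne (hx.trans_lt hy)
    exact hz.trans (monotone_cdf μ hzy.le)
  have hright : Tendsto (cdf μ) (𝓝[>] x) (𝓝 (cdf μ x)) :=
    ((cdf μ).right_continuous x).mono_left (nhdsWithin_mono _ Ioi_subset_Ici_self)
  exact ge_of_tendsto hright (eventually_nhdsWithin_of_forall hgt)

theorem lt_quantile_iff (hu : u ∈ Ioo 0 1) {x : ℝ} : x < quantile μ u ↔ cdf μ x < u := by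
  simpa only [not_le] using (quantile_le_iff hu).not

theorem monotoneOn_quantile (μ : Measure ℝ) : MonotoneOn (quantile μ) (Ioo 0 1) :=
  fun _ hu _ hv huv => (quantile_le_iff hu).2 (huv.trans ((quantile_le_iff hv).1 le_rfl))

theorem aemeasurable_quantile (μ : Measure ℝ) :
    AEMeasurable (quantile μ) (volume.restrict (Ioo 0 1)) :=
  aemeasurable_restrict_of_monotoneOn measurableSet_Ioo (monotoneOn_quantile μ)

theorem map_quantile (μ : Measure ℝ) [IsProbabilityMeasure μ] :
    (volume.restrict (Ioo 0 1)).map (quantile μ) = μ := by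
  refine Measure.ext_of_Iic _ _ fun x => ?_
  have hpreimage : quantile μ ⁻¹' Iic x ∩ Ioo 0 1 = Ioo 0 1 ∩ Iic (cdf μ x) := by
    ext u
    simp only [mem_inter_iff, mem_preimage, mem_Iic, and_comm (b := u ∈ Ioo 0 1)]
    exact and_congr_right fun hu => quantile_le_iff hu
  rw [Measure.map_apply_of_aemeasurable (aemeasurable_quantile μ) measurableSet_Iic,
    Measure.restrict_apply' measurableSet_Ioo, hpreimage, ← ofReal_cdf]
  refine le_antisymm ((measure_mono fun u hu => ?_ : _ ≤ volume (Ioc 0 (cdf μ x))).trans_eq ?_)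
    ((?_ : _ = volume (Ioo 0 (cdf μ x))).trans_le (measure_mono fun u hu => ?_))
  · exact ⟨hu.1.1, hu.2⟩
  · rw [Real.volume_Ioc, sub_zero]
  · rw [Real.volume_Ioo, sub_zero]
  · exact ⟨⟨hu.1, hu.2.trans_le (cdf_le_one μ x)⟩, hu.2.le⟩

theorem exists_mem_Ioo_measure_singleton_eq_zero (μ : Measure ℝ) [SFinite μ] {a b : ℝ}
    (hab : a < b) : ∃ x ∈ Ioo a b, μ {x} = 0 := by
  have hatoms : {x | 0 < μ {x}}.Countable :=
    Measure.countable_meas_pos_of_disjoint_iUnion measurableSet_singleton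
      fun _ _ hxy => disjoint_singleton.2 hxy
  obtain ⟨x, hx, hxab⟩ := (hatoms.dense_compl ℝ).exists_between hab
  exact ⟨x, hxab, by simpa using hx⟩

variable {ι : Type*} {l : Filter ι} {μs : ι → ProbabilityMeasure ℝ} {μ : ProbabilityMeasure ℝ}

theorem tendsto_cdf (h : Tendsto μs l (𝓝 μ)) {x : ℝ} (hx : (μ : Measure ℝ) {x} = 0) :
    Tendsto (fun i => cdf (μs i : Measure ℝ) x) l (𝓝 (cdf (μ : Measure ℝ) x)) := by
  simp only [cdf_eq_real]
  exact (ENNReal.tendsto_toReal (measure_ne_top _ _)).comp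
    (ProbabilityMeasure.tendsto_measure_of_null_frontier_of_tendsto' h (by rwa [frontier_Iic]))

theorem tendsto_quantile (h : Tendsto μs l (𝓝 μ)) (hu : u ∈ Ioo 0 1)
    (hcont : ContinuousAt (quantile μ) u) :
    Tendsto (fun i => quantile (μs i) u) l (𝓝 (quantile μ u)) := by
  refine tendsto_order.2 ⟨fun y hy => ?_, fun y hy => ?_⟩
  · obtain ⟨x, ⟨hyx, hx⟩, hx0⟩ := exists_mem_Ioo_measure_singleton_eq_zero (μ : Measure ℝ) hy
    filter_upwards [(tendsto_cdf h hx0).eventually_lt_const ((lt_quantile_iff hu).1 hx)] with i hi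
    exact hyx.trans ((lt_quantile_iff hu).2 hi)
  · have hnear : ∀ᶠ v in 𝓝 u, quantile μ v < y ∧ v ∈ Ioo (0 : ℝ) 1 :=
      (hcont.eventually_lt_const hy).and (Ioo_mem_nhds hu.1 hu.2)
    obtain ⟨v, ⟨hvy, hv⟩, huv⟩ :=
      ((hnear.filter_mono nhdsWithin_le_nhds).and (self_mem_nhdsWithin (s := Ioi u))).exists
    obtain ⟨x, ⟨hvx, hxy⟩, hx0⟩ := exists_mem_Ioo_measure_singleton_eq_zero (μ : Measure ℝ) hvy
    have hux : u < cdf (μ : Measure ℝ) x := huv.trans_le ((quantile_le_iff hv).1 hvx.le)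
    filter_upwards [(tendsto_cdf h hx0).eventually_const_lt hux] with i hi
    exact ((quantile_le_iff hu).2 hi.le).trans_lt hxy

theorem ae_tendsto_quantile (h : Tendsto μs l (𝓝 μ)) :
    ∀ᵐ u ∂volume.restrict (Ioo 0 1), Tendsto (fun i => quantile (μs i) u) l (𝓝 (quantile μ u)) := by
  have hcount := (monotoneOn_quantile (μ : Measure ℝ)).countable_not_continuousWithinAt
  filter_upwards [hcount.ae_notMem _, ae_restrict_mem measurableSet_Ioo] with u hnot hu
  have hcont : ContinuousWithinAt (quantile μ) (Ioo 0 1) u := by_contra fun hc => hnot ⟨hu, hc⟩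
  exact tendsto_quantile h hu (hcont.continuousAt (Ioo_mem_nhds hu.1 hu.2))

theorem ae_norm_quantile_le {ν : Measure ℝ} [IsProbabilityMeasure ν] {R : ℝ}
    (hν : ∀ᵐ x ∂ν, ‖x‖ ≤ R) :
    ∀ᵐ u ∂volume.restrict (Ioo 0 1), ‖quantile ν u‖ ≤ R := by
  rw [← map_quantile ν] at hν
  exact ae_of_ae_map (aemeasurable_quantile ν) hν

theorem W2_le_eLpNorm_quantile_sub (μ ν : Measure ℝ) [IsProbabilityMeasure μ]
    [IsProbabilityMeasure ν] :
    W2 μ ν ≤ eLpNorm (quantile μ - quantile ν) 2 (volume.restrict (Ioo 0 1)) := by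
  simpa only [map_quantile] using
    W2_map_map_le (aemeasurable_quantile μ) (aemeasurable_quantile ν)

theorem tendsto_W2_of_ae_norm_le [l.IsCountablyGenerated] (h : Tendsto μs l (𝓝 μ)) {R : ℝ}
    (hμs : ∀ᶠ i in l, ∀ᵐ x ∂(μs i : Measure ℝ), ‖x‖ ≤ R) (hμ : ∀ᵐ x ∂(μ : Measure ℝ), ‖x‖ ≤ R) :
    Tendsto (fun i => W2 (μs i : Measure ℝ) μ) l (𝓝 0) := by
  have hquantile : Tendsto (fun i => eLpNorm (quantile (μs i) - quantile μ) 2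
      (volume.restrict (Ioo 0 1))) l (𝓝 0) := by
    refine tendsto_eLpNorm_zero_of_enorm_le (C := ENNReal.ofReal (R + R)) ofNat_ne_top ofReal_ne_top
      (.of_forall fun i => ?_) ?_ ?_
    · exact ((aemeasurable_quantile _).sub (aemeasurable_quantile _)).aestronglyMeasurable
    · filter_upwards [hμs] with i hi
      filter_upwards [ae_norm_quantile_le hi, ae_norm_quantile_le hμ] with u hi hu
      rw [← ofReal_norm]
      exact ENNReal.ofReal_le_ofReal ((norm_sub_le _ _).trans (add_le_add hi hu))
    · filter_upwards [ae_tendsto_quantile h] with u hu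
      simpa using (hu.sub_const (quantile μ u)).enorm
  exact tendsto_of_tendsto_of_tendsto_of_le_of_le tendsto_const_nhds hquantile
    (fun _ => zero_le) fun i => W2_le_eLpNorm_quantile_sub _ _

end Quantile

/-! ### The sliced distance on measures with finite second moment -/

section Sliced

variable {d : ℕ} {μ ν ρ : Measure (Ed d)}

theorem continuous_proj (θ : Ed d) : Continuous (proj θ) :=
  continuous_id.inner continuous_const

theorem W2_map_proj_map_proj_le (μ : Measure (Ed d)) (θ θ' : Ed d) :
    W2 (μ.map (proj θ)) (μ.map (proj θ')) ≤ edist θ θ' * eLpNorm id 2 μ := by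
  refine (W2_map_map_le (continuous_proj θ).aemeasurable (continuous_proj θ').aemeasurable).trans ?_
  refine eLpNorm_le_mul_eLpNorm_of_ae_le_mul'' 2 (by fun_prop) (.of_forall fun x => ?_)
  have hsub : (proj θ - proj θ') x = ⟪θ - θ', x⟫ := by
    rw [real_inner_comm, inner_sub_right]
    rfl
  rw [hsub, edist_eq_enorm_sub, enorm_eq_nnnorm, enorm_eq_nnnorm, enorm_eq_nnnorm]
  exact_mod_cast nnnorm_inner_le_nnnorm (𝕜 := ℝ) (θ - θ') x

theorem W2_map_proj_le_add [IsFiniteMeasure μ] [IsFiniteMeasure ν] (θ θ' : Ed d) :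
    W2 (μ.map (proj θ)) (ν.map (proj θ)) ≤ W2 (μ.map (proj θ')) (ν.map (proj θ'))
      + (eLpNorm id 2 μ + eLpNorm id 2 ν) * edist θ θ' :=
  calc W2 (μ.map (proj θ)) (ν.map (proj θ))
    _ ≤ W2 (μ.map (proj θ)) (μ.map (proj θ')) + (W2 (μ.map (proj θ')) (ν.map (proj θ'))
        + W2 (ν.map (proj θ')) (ν.map (proj θ))) :=
      (W2_triangle _ _ _).trans (by gcongr; exact W2_triangle _ _ _)
    _ ≤ edist θ θ' * eLpNorm id 2 μ + (W2 (μ.map (proj θ')) (ν.map (proj θ'))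
        + edist θ' θ * eLpNorm id 2 ν) := by
      gcongr <;> exact W2_map_proj_map_proj_le _ _ _
    _ = _ := by
      rw [edist_comm θ' θ]
      ring

theorem W2_map_proj_le [IsProbabilityMeasure μ] [IsProbabilityMeasure ν] (θ : Ed d) :
    W2 (μ.map (proj θ)) (ν.map (proj θ)) ≤ (eLpNorm id 2 μ + eLpNorm id 2 ν) * ‖θ‖ₑ := by
  have hzero : proj (0 : Ed d) = fun _ => 0 := funext fun x => inner_zero_right x
  simpa [hzero, W2_self] using W2_map_proj_le_add (μ := μ) (ν := ν) θ 0

theorem continuous_W2_map_proj [IsFiniteMeasure μ] [IsFiniteMeasure ν]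
    (hμ : eLpNorm id 2 μ ≠ ∞) (hν : eLpNorm id 2 ν ≠ ∞) :
    Continuous fun θ => W2 (μ.map (proj θ)) (ν.map (proj θ)) :=
  continuous_of_le_add_edist _ (add_ne_top.2 ⟨hμ, hν⟩) W2_map_proj_le_add

theorem finiteSecondMoment_iff : FiniteSecondMoment μ ↔ eLpNorm id 2 μ ≠ ∞ := by
  have hsq : ∫⁻ x, (‖x‖₊ : ℝ≥0∞) ^ 2 ∂μ = eLpNorm id 2 μ ^ 2 := (eLpNorm_two_sq id μ).symm
  rw [FiniteSecondMoment, hsq, lt_top_iff_ne_top, pow_ne_top_iff]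
  simp

theorem unifSphere_univ_le_one (d : ℕ) : unifSphere d Set.univ ≤ 1 := by
  rw [unifSphere, Measure.smul_apply, smul_eq_mul]
  exact ENNReal.inv_mul_le_one _

instance isFiniteMeasure_unifSphere (d : ℕ) : IsFiniteMeasure (unifSphere d) :=
  ⟨(unifSphere_univ_le_one d).trans_lt one_lt_top⟩

/-- The Sliced-Wasserstein distance as an extended nonnegative real, written as an `L²` norm over
the sphere so that Minkowski's inequality applies; `SW2` is its real-valued version. -/
def eSW2 (μ ν : Measure (Ed d)) : ℝ≥0∞ :=
  eLpNorm (fun θ : sphere (0 : Ed d) 1 => W2 (μ.map (proj θ)) (ν.map (proj θ))) 2 (unifSphere d)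

theorem eSW2_sq (μ ν : Measure (Ed d)) : eSW2 μ ν ^ 2 = SW2sq μ ν := by
  simp only [eSW2, eLpNorm_two_sq, enorm_eq_self, W2_sq, SW2sq]

theorem SW2_eq_toReal_eSW2 (μ ν : Measure (Ed d)) : SW2 μ ν = (eSW2 μ ν).toReal := by
  rw [SW2, ← eSW2_sq, toReal_pow, Real.sqrt_sq toReal_nonneg]

theorem eSW2_self (μ : Measure (Ed d)) : eSW2 μ μ = 0 := by
  simp only [eSW2, W2_self]
  exact eLpNorm_zero'

theorem eSW2_comm (μ ν : Measure (Ed d)) : eSW2 μ ν = eSW2 ν μ := by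
  simp only [eSW2, W2_comm (μ.map _)]

theorem enorm_W2_map_proj_le_of_mem_sphere [IsProbabilityMeasure μ] [IsProbabilityMeasure ν]
    (θ : sphere (0 : Ed d) 1) :
    ‖W2 (μ.map (proj θ)) (ν.map (proj θ))‖ₑ ≤ eLpNorm id 2 μ + eLpNorm id 2 ν := by
  have hθ : ‖(θ : Ed d)‖ₑ = 1 := by rw [← ofReal_norm, norm_eq_of_mem_sphere θ, ofReal_one]
  simpa [hθ] using W2_map_proj_le (μ := μ) (ν := ν) θ

theorem eSW2_ne_top [IsProbabilityMeasure μ] [IsProbabilityMeasure ν]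
    (hμ : eLpNorm id 2 μ ≠ ∞) (hν : eLpNorm id 2 ν ≠ ∞) : eSW2 μ ν ≠ ∞ := by
  have hle : eSW2 μ ν ≤ _ :=
    eLpNorm_le_of_ae_enorm_bound (.of_forall enorm_W2_map_proj_le_of_mem_sphere)
  refine ne_top_of_le_ne_top (mul_ne_top (add_ne_top.2 ⟨hμ, hν⟩) ?_) hle
  exact rpow_ne_top_of_nonneg (by positivity) (measure_ne_top _ _)

theorem aestronglyMeasurable_W2_map_proj [IsFiniteMeasure μ] [IsFiniteMeasure ν]
    (hμ : eLpNorm id 2 μ ≠ ∞) (hν : eLpNorm id 2 ν ≠ ∞) :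
    AEStronglyMeasurable (fun θ : sphere (0 : Ed d) 1 => W2 (μ.map (proj θ)) (ν.map (proj θ)))
      (unifSphere d) :=
  ((continuous_W2_map_proj hμ hν).comp continuous_subtype_val).aestronglyMeasurable

theorem eSW2_triangle [IsFiniteMeasure μ] [IsFiniteMeasure ν] [IsFiniteMeasure ρ]
    (hμ : eLpNorm id 2 μ ≠ ∞) (hν : eLpNorm id 2 ν ≠ ∞) (hρ : eLpNorm id 2 ρ ≠ ∞) :
    eSW2 μ ρ ≤ eSW2 μ ν + eSW2 ν ρ :=
  (eLpNorm_mono_enorm fun _ => W2_triangle _ _ _).trans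
    (eLpNorm_add_le (aestronglyMeasurable_W2_map_proj hμ hν)
      (aestronglyMeasurable_W2_map_proj hν hρ) one_le_two)

theorem tendsto_eSW2_of_ae_norm_le {ι : Type*} {l : Filter ι} [l.IsCountablyGenerated]
    {μs : ι → ProbabilityMeasure (Ed d)} {μ : ProbabilityMeasure (Ed d)} (h : Tendsto μs l (𝓝 μ))
    {R : ℝ} (hμs : ∀ i, ∀ᵐ x ∂(μs i : Measure (Ed d)), ‖x‖ ≤ R)
    (hμ : ∀ᵐ x ∂(μ : Measure (Ed d)), ‖x‖ ≤ R) :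
    Tendsto (fun i => eSW2 (μs i : Measure (Ed d)) μ) l (𝓝 0) := by
  have hmoment {ν : ProbabilityMeasure (Ed d)} (hν : ∀ᵐ x ∂(ν : Measure (Ed d)), ‖x‖ ≤ R) :
      eLpNorm id 2 (ν : Measure (Ed d)) ≤ ENNReal.ofReal R := by
    simpa using eLpNorm_le_of_ae_bound (p := 2) (f := id) hν
  have hproj {ν : ProbabilityMeasure (Ed d)} (hν : ∀ᵐ x ∂(ν : Measure (Ed d)), ‖x‖ ≤ R)
      (θ : sphere (0 : Ed d) 1) : ∀ᵐ y ∂(ν : Measure (Ed d)).map (proj θ), ‖y‖ ≤ R := by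
    rw [ae_map_iff (continuous_proj _).aemeasurable (measurableSet_le (by fun_prop) (by fun_prop))]
    filter_upwards [hν] with x hx
    exact (norm_inner_le_norm x θ.1).trans (by simpa using hx)
  refine tendsto_eLpNorm_zero_of_enorm_le (C := ENNReal.ofReal R + ENNReal.ofReal R)
    ofNat_ne_top (by finiteness) (.of_forall fun i => ?_) (.of_forall fun i => ?_) ?_
  · exact aestronglyMeasurable_W2_map_proj (ne_top_of_le_ne_top ofReal_ne_top (hmoment (hμs i)))
      (ne_top_of_le_ne_top ofReal_ne_top (hmoment hμ))
  · exact .of_forall fun θ => (enorm_W2_map_proj_le_of_mem_sphere θ).trans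
      (add_le_add (hmoment (hμs i)) (hmoment hμ))
  · refine .of_forall fun θ => ?_
    have hweak := ProbabilityMeasure.tendsto_map_of_tendsto_of_continuous μs μ h (continuous_proj θ)
    simpa only [enorm_eq_self, ProbabilityMeasure.toMeasure_map] using
      tendsto_W2_of_ae_norm_le (R := R) hweak
        (.of_forall fun i => by simpa only [ProbabilityMeasure.toMeasure_map] using hproj (hμs i) θ)
        (by simpa only [ProbabilityMeasure.toMeasure_map] using hproj hμ θ)

end Sliced

section SlicedP2

variable {d : ℕ} {K : Set (Ed d)}

/-- The space `P_2(K)` with the Sliced-Wasserstein distance: a structure rather than a subtype, so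
that it does not inherit the weak topology of `ProbabilityMeasure`. -/
structure SlicedP2 (K : Set (Ed d)) where
  measure : ProbabilityMeasure (Ed d)
  memP2 : MemP2 K measure.toMeasure

instance : PseudoMetricSpace (SlicedP2 K) where
  dist μ ν := SW2 μ.measure.toMeasure ν.measure.toMeasure
  dist_self μ := by rw [SW2_eq_toReal_eSW2, eSW2_self, toReal_zero]
  dist_comm μ ν := by rw [SW2_eq_toReal_eSW2, eSW2_comm, ← SW2_eq_toReal_eSW2]
  dist_triangle μ ν ρ := by
    have hμ := finiteSecondMoment_iff.1 μ.memP2.2.2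
    have hν := finiteSecondMoment_iff.1 ν.memP2.2.2
    have hρ := finiteSecondMoment_iff.1 ρ.memP2.2.2
    simp only [SW2_eq_toReal_eSW2]
    rw [← toReal_add (eSW2_ne_top hμ hν) (eSW2_ne_top hν hρ)]
    exact toReal_mono (add_ne_top.2 ⟨eSW2_ne_top hμ hν, eSW2_ne_top hν hρ⟩)
      (eSW2_triangle hμ hν hρ)

theorem SlicedP2.dist_sq (μ ν : SlicedP2 K) :
    dist μ ν ^ 2 = (SW2sq μ.measure.toMeasure ν.measure.toMeasure).toReal :=
  Real.sq_sqrt toReal_nonneg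

theorem memP2_iff_of_isBounded (hK : Bornology.IsBounded K) (μ : ProbabilityMeasure (Ed d)) :
    MemP2 K μ.toMeasure ↔ μ.toMeasure Kᶜ = 0 := by
  refine ⟨fun h => h.2.1, fun h => ⟨inferInstance, h, ?_⟩⟩
  obtain ⟨R, hR⟩ := hK.exists_norm_le
  have hnorm : ∀ᵐ x ∂μ.toMeasure, ‖x‖ ≤ R := (show ∀ᵐ x ∂μ.toMeasure, x ∈ K from h).mono hR
  exact finiteSecondMoment_iff.2 ((eLpNorm_le_of_ae_bound hnorm).trans_lt (by finiteness)).ne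

theorem isCompact_setOf_memP2 (hK : IsCompact K) :
    IsCompact {μ : ProbabilityMeasure (Ed d) | MemP2 K μ.toMeasure} := by
  have := isCompact_setOfPred_probabilityMeasure_mass_eq_compl_isCompact_le (u := fun _ => 0)
    (K := fun _ => K) tendsto_const_nhds (fun _ => hK) (.inl inferInstance)
  simpa [memP2_iff_of_isBounded hK.isBounded] using this

theorem MemP2.ae_mem {μ : Measure (Ed d)} (h : MemP2 K μ) : ∀ᵐ x ∂μ, x ∈ K :=
  h.2.1

theorem continuous_slicedP2_mk (hK : Bornology.IsBounded K) :
    Continuous fun μ : {μ : ProbabilityMeasure (Ed d) | MemP2 K μ.toMeasure} =>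
      SlicedP2.mk μ.1 μ.2 := by
  obtain ⟨R, hR⟩ := hK.exists_norm_le
  refine continuous_iff_continuousAt.2 fun μ => tendsto_iff_dist_tendsto_zero.2 ?_
  have hlim := tendsto_eSW2_of_ae_norm_le (continuous_subtype_val.tendsto μ)
    (fun ν => ν.2.ae_mem.mono hR) (μ.2.ae_mem.mono hR)
  refine ((tendsto_toReal zero_ne_top).comp hlim).congr fun ν => ?_
  exact (SW2_eq_toReal_eSW2 _ _).symm

theorem compactSpace_slicedP2 (hK : IsCompact K) : CompactSpace (SlicedP2 K) := by
  have := isCompact_iff_compactSpace.1 (isCompact_setOf_memP2 hK)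
  have hsurj : Function.Surjective
      fun μ : {μ : ProbabilityMeasure (Ed d) | MemP2 K μ.toMeasure} => SlicedP2.mk μ.1 μ.2 :=
    fun μ => ⟨⟨μ.measure, μ.memP2⟩, rfl⟩
  exact hsurj.compactSpace (continuous_slicedP2_mk hK.isBounded)

end SlicedP2

/-! ### Asymptotic equicontinuity -/

section AsymptoticallyEquicontinuous

variable {ι κ α X : Type*} [UniformSpace α] [UniformSpace X] {f : ι → α → X} {l : Filter ι}

/-- Uniform equicontinuity of the family `f` up to errors that vanish along `l`. The maps `f i`
themselves may be discontinuous, which is what makes the notion suitable for piecewise constant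
interpolations. -/
def AsymptoticallyEquicontinuous (f : ι → α → X) (l : Filter ι) : Prop :=
  ∀ U ∈ 𝓤 X, ∃ V ∈ 𝓤 α, ∀ᶠ i in l, ∀ x y, (x, y) ∈ V → (f i x, f i y) ∈ U

namespace AsymptoticallyEquicontinuous

theorem comp_tendsto (hf : AsymptoticallyEquicontinuous f l) {l' : Filter κ} {φ : κ → ι}
    (hφ : Tendsto φ l' l) : AsymptoticallyEquicontinuous (f ∘ φ) l' := by
  intro U hU
  obtain ⟨V, hV, hfV⟩ := hf U hU
  exact ⟨V, hV, hφ.eventually hfV⟩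

theorem exists_forall_tendsto [CompleteSpace X] [l.NeBot] (hf : AsymptoticallyEquicontinuous f l)
    {D : Set α} (hD : Dense D) {g : D → X} (hg : ∀ x : D, Tendsto (fun i => f i x) l (𝓝 (g x))) :
    ∃ h : α → X, ∀ x, Tendsto (fun i => f i x) l (𝓝 (h x)) := by
  suffices hcauchy : ∀ x, Cauchy (map (fun i => f i x) l) from
    ⟨_, fun x => (hcauchy x).le_nhds_lim⟩
  refine fun x => cauchy_map_iff.2 ⟨inferInstance, fun W hW => ?_⟩
  obtain ⟨U, hU, hsymm, hUW⟩ := comp_comp_symm_mem_uniformity_sets hW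
  obtain ⟨V, hV, hfV⟩ := hf U hU
  obtain ⟨y, hyD, hxy⟩ := hD.inter_nhds_nonempty (UniformSpace.ball_mem_nhds x hV)
  have hy : ∀ᶠ p : ι × ι in l ×ˢ l, (f p.1 y, f p.2 y) ∈ U :=
    (cauchy_map_iff.1 (hg ⟨y, hyD⟩).cauchy_map).2 hU
  rw [mem_map]
  filter_upwards [hy, hfV.prod_mk hfV] with p hpy ⟨hp₁, hp₂⟩
  exact hUW ⟨f p.2 y, ⟨f p.1 y, hp₁ x y hxy, hpy⟩, hsymm.symm _ _ (hp₂ x y hxy)⟩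

theorem tendstoUniformlyOn [l.NeBot] (hf : AsymptoticallyEquicontinuous f l) {g : α → X}
    (hg : ∀ x, Tendsto (fun i => f i x) l (𝓝 (g x))) {s : Set α} (hs : TotallyBounded s) :
    TendstoUniformlyOn f g l s := by
  intro W hW
  obtain ⟨U, hU, hsymm, hUW⟩ := comp_comp_symm_mem_uniformity_sets hW
  obtain ⟨U', ⟨hU', hclosed⟩, hU'U⟩ := uniformity_hasBasis_closed.mem_iff.1 hU
  obtain ⟨V, hV, hfV⟩ := hf U' hU'
  obtain ⟨t, ht, hst⟩ := hs V hV
  have hgV : ∀ x y, (x, y) ∈ V → (g x, g y) ∈ U' := fun x y hxy =>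
    hclosed.mem_of_tendsto ((hg x).prodMk_nhds (hg y)) (hfV.mono fun i hi => hi x y hxy)
  have hnet : ∀ᶠ i in l, ∀ y ∈ t, (g y, f i y) ∈ U :=
    ht.eventually_all.2 fun y _ => hg y (UniformSpace.ball_mem_nhds (g y) hU)
  filter_upwards [hfV, hnet] with i hi hit x hx
  obtain ⟨y, hyt, hxy⟩ := Set.mem_iUnion₂.1 (hst hx)
  exact hUW ⟨f i y, ⟨g y, hU'U (hgV x y hxy), hit y hyt⟩, hsymm.symm _ _ (hU'U (hi x y hxy))⟩

theorem exists_subseq_forall_tendsto [CompactSpace X] [FirstCountableTopology X]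
    [TopologicalSpace.SeparableSpace α] {f : ℕ → α → X}
    (hf : AsymptoticallyEquicontinuous f atTop) :
    ∃ φ : ℕ → ℕ, StrictMono φ ∧ ∃ g : α → X, ∀ x, Tendsto (fun n => f (φ n) x) atTop (𝓝 (g x)) := by
  obtain ⟨D, hDcount, hD⟩ := TopologicalSpace.exists_countable_dense α
  have := hDcount.to_subtype
  obtain ⟨g, φ, hφ, hg⟩ := CompactSpace.tendsto_subseq fun n (x : D) => f n x
  exact ⟨φ, hφ, (hf.comp_tendsto hφ.tendsto_atTop).exists_forall_tendsto hD (tendsto_pi_nhds.1 hg)⟩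

end AsymptoticallyEquicontinuous

end AsymptoticallyEquicontinuous

theorem asymptoticallyEquicontinuous_of_dist_le {ι α X : Type*} [PseudoMetricSpace α]
    [PseudoMetricSpace X] {f : ι → α → X} {l : Filter ι} {ω : ℝ → ℝ} (hω : Tendsto ω (𝓝 0) (𝓝 0))
    {r : ι → ℝ} (hr : Tendsto r l (𝓝 0))
    (hf : ∀ᶠ i in l, ∀ x y, dist (f i x) (f i y) ≤ ω (dist x y + r i)) :
    AsymptoticallyEquicontinuous f l := by
  intro U hU
  obtain ⟨ε, hε, hεU⟩ := mem_uniformity_dist.1 hU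
  obtain ⟨δ, hδ, hωδ⟩ := Metric.eventually_nhds_iff.1 (hω.eventually (gt_mem_nhds hε))
  refine ⟨_, dist_mem_uniformity (half_pos hδ), ?_⟩
  filter_upwards [hf, hr.abs.eventually_lt_const (u := δ / 2) (by simpa using half_pos hδ)]
    with i hi hri x y (hxy : dist x y < δ / 2)
  refine hεU ((hi x y).trans_lt (hωδ ?_))
  rw [dist_zero_right, Real.norm_eq_abs]
  linarith [abs_add_le (dist x y) (r i), abs_of_nonneg (dist_nonneg (x := x) (y := y))]

/-! ### Minimizing movements -/

section MinimizingMovement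

variable {X : Type*} [PseudoMetricSpace X] {F : X → ℝ} {τ : ℝ} {x : ℕ → X}

/-- `x` is a sequence produced by the implicit Euler (JKO) scheme for `F` with step `τ`: each
`x (k + 1)` minimizes `y ↦ dist y (x k) ^ 2 / (2 * τ) + F y`. -/
def IsMinimizingMovement (F : X → ℝ) (τ : ℝ) (x : ℕ → X) : Prop :=
  ∀ k y, dist (x (k + 1)) (x k) ^ 2 / (2 * τ) + F (x (k + 1)) ≤ dist y (x k) ^ 2 / (2 * τ) + F y

theorem ceil_div_sub_ceil_div_mul_le {s t : ℝ} (hτ : 0 < τ) (hst : s ≤ t) :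
    ((⌈t / τ⌉₊ : ℝ) - ⌈s / τ⌉₊) * τ ≤ t - s + τ := by
  rcases le_total t 0 with ht | ht
  · rw [Nat.ceil_eq_zero.2 (div_nonpos_of_nonpos_of_nonneg ht hτ.le),
      Nat.ceil_eq_zero.2 (div_nonpos_of_nonpos_of_nonneg (hst.trans ht) hτ.le), sub_self, zero_mul]
    linarith
  · calc ((⌈t / τ⌉₊ : ℝ) - ⌈s / τ⌉₊) * τ ≤ (t / τ + 1 - s / τ) * τ := by
          gcongr
          · exact (Nat.ceil_lt_add_one (div_nonneg ht hτ.le)).le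
          · exact Nat.le_ceil _
      _ = t - s + τ := by field_simp; ring

namespace IsMinimizingMovement

theorem dist_sq_le (hx : IsMinimizingMovement F τ x) (hτ : 0 < τ) (k : ℕ) :
    dist (x k) (x (k + 1)) ^ 2 ≤ 2 * τ * (F (x k) - F (x (k + 1))) := by
  have h := hx k (x k)
  rw [dist_self, zero_pow two_ne_zero, zero_div, zero_add, ← le_sub_iff_add_le,
    div_le_iff₀' (by positivity)] at h
  rwa [dist_comm]

theorem antitone_comp (hx : IsMinimizingMovement F τ x) (hτ : 0 < τ) : Antitone (F ∘ x) :=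
  antitone_nat_of_succ_le fun k => sub_nonneg.1 <|
    nonneg_of_mul_nonneg_right ((sq_nonneg _).trans (hx.dist_sq_le hτ k)) (by positivity)

theorem dist_sq_le_of_le (hx : IsMinimizingMovement F τ x) (hτ : 0 < τ) {k m : ℕ} (hkm : k ≤ m) :
    dist (x k) (x m) ^ 2 ≤ 2 * ((m - k) * τ) * (F (x k) - F (x m)) := by
  have htelescope : ∑ i ∈ Finset.Ico k m, (F (x i) - F (x (i + 1))) = F (x k) - F (x m) := by
    simpa [neg_add_eq_sub] using Finset.sum_Ico_sub (fun i => -F (x i)) hkm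
  calc dist (x k) (x m) ^ 2 ≤ (∑ i ∈ Finset.Ico k m, dist (x i) (x (i + 1))) ^ 2 := by
        gcongr
        exact dist_le_Ico_sum_dist x hkm
    _ ≤ (m - k) * ∑ i ∈ Finset.Ico k m, dist (x i) (x (i + 1)) ^ 2 := by
        simpa [Nat.cast_sub hkm] using sq_sum_le_card_mul_sum_sq (s := Finset.Ico k m)
          (f := fun i => dist (x i) (x (i + 1)))
    _ ≤ (m - k) * ∑ i ∈ Finset.Ico k m, 2 * τ * (F (x i) - F (x (i + 1))) := by
        have : (0 : ℝ) ≤ m - k := sub_nonneg.2 (mod_cast hkm)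
        gcongr with i
        exact hx.dist_sq_le hτ i
    _ = 2 * ((m - k) * τ) * (F (x k) - F (x m)) := by
        rw [← Finset.mul_sum, htelescope]
        ring

theorem dist_ceil_div_le (hx : IsMinimizingMovement F τ x) (hτ : 0 < τ) {b : ℝ} (hb : ∀ y, b ≤ F y)
    (s t : ℝ) :
    dist (x ⌈s / τ⌉₊) (x ⌈t / τ⌉₊) ≤ √(2 * (F (x 0) - b) * (dist s t + τ)) := by
  wlog hst : s ≤ t generalizing s t
  · rw [dist_comm, dist_comm s]
    exact this t s (le_of_not_ge hst)
  have hceil : ⌈s / τ⌉₊ ≤ ⌈t / τ⌉₊ := by gcongr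
  have hdrop : F (x ⌈s / τ⌉₊) - F (x ⌈t / τ⌉₊) ≤ F (x 0) - b :=
    sub_le_sub (hx.antitone_comp hτ (Nat.zero_le _)) (hb _)
  refine Real.le_sqrt_of_sq_le ((hx.dist_sq_le_of_le hτ hceil).trans ?_)
  calc 2 * ((⌈t / τ⌉₊ - ⌈s / τ⌉₊) * τ) * (F (x ⌈s / τ⌉₊) - F (x ⌈t / τ⌉₊))
      ≤ 2 * (dist s t + τ) * (F (x 0) - b) := by
        gcongr
        · exact sub_nonneg.2 (hx.antitone_comp hτ hceil)
        · rw [dist_comm, Real.dist_eq, abs_of_nonneg (sub_nonneg.2 hst)]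
          exact ceil_div_sub_ceil_div_mul_le hτ hst
    _ = 2 * (F (x 0) - b) * (dist s t + τ) := by ring

end IsMinimizingMovement

theorem exists_subseq_tendstoUniformlyOn_of_isMinimizingMovement [CompactSpace X]
    (hF : BddBelow (Set.range F)) {τ : ℕ → ℝ} (hτ : ∀ n, 0 < τ n) (hτ0 : Tendsto τ atTop (𝓝 0))
    {x₀ : X} {x : ℕ → ℕ → X} (hx₀ : ∀ n, x n 0 = x₀)
    (hx : ∀ n, IsMinimizingMovement F (τ n) (x n)) :
    ∃ φ : ℕ → ℕ, StrictMono φ ∧ ∃ c : ℝ → X,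
      (∃ C : ℝ, 0 ≤ C ∧ ∀ s t, dist (c s) (c t) ≤ C * |s - t| ^ (1 / 2 : ℝ)) ∧
      ∀ I : Set ℝ, TotallyBounded I →
        TendstoUniformlyOn (fun n t => x (φ n) ⌈t / τ (φ n)⌉₊) c atTop I := by
  obtain ⟨b, hb⟩ := hF
  set A : ℝ := 2 * (F x₀ - b)
  have hA : 0 ≤ A := mul_nonneg zero_le_two (sub_nonneg.2 (hb (Set.mem_range_self _)))
  have hdist : ∀ n s t, dist (x n ⌈s / τ n⌉₊) (x n ⌈t / τ n⌉₊) ≤ √(A * (dist s t + τ n)) :=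
    fun n s t => by
      simpa only [hx₀] using (hx n).dist_ceil_div_le (hτ n) (fun y => hb (Set.mem_range_self y)) s t
  have hmodulus : Continuous fun δ : ℝ => √(A * δ) := by fun_prop
  have hequi : AsymptoticallyEquicontinuous (fun n t => x n ⌈t / τ n⌉₊) atTop :=
    asymptoticallyEquicontinuous_of_dist_le (by simpa using hmodulus.tendsto 0) hτ0
      (.of_forall hdist)
  obtain ⟨φ, hφ, c, hc⟩ := hequi.exists_subseq_forall_tendsto
  refine ⟨φ, hφ, c, ⟨√A, Real.sqrt_nonneg _, fun s t => ?_⟩, fun I hI =>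
    (hequi.comp_tendsto hφ.tendsto_atTop).tendstoUniformlyOn hc hI⟩
  rw [← Real.sqrt_eq_rpow, ← Real.sqrt_mul hA, ← Real.dist_eq]
  have hlim : Tendsto (fun n => √(A * (dist s t + τ (φ n)))) atTop (𝓝 √(A * dist s t)) := by
    simpa only [add_zero, Function.comp_def] using
      (hmodulus.tendsto _).comp ((hτ0.comp hφ.tendsto_atTop).const_add (dist s t))
  exact le_of_tendsto_of_tendsto' ((hc s).dist (hc t)) hlim fun n => hdist (φ n) s t

end MinimizingMovement

theorem swjko_limit_curve_exists_general (d : ℕ) (K : Set (Ed d)) (hK : IsCompact K)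
    (F : ProbabilityMeasure (Ed d) → ℝ)
    (hFbdd : BddBelow (F '' {μ : ProbabilityMeasure (Ed d) | MemP2 K μ.toMeasure}))
    (μ0 : ProbabilityMeasure (Ed d)) (μseq : ℝ → ℕ → ProbabilityMeasure (Ed d))
    (hstart : ∀ τ : ℝ, 0 < τ → μseq τ 0 = μ0)
    (hmem : ∀ τ : ℝ, 0 < τ → ∀ k, MemP2 K (μseq τ k).toMeasure)
    (hmin : ∀ τ : ℝ, 0 < τ → ∀ k, ∀ ν : ProbabilityMeasure (Ed d), MemP2 K ν.toMeasure →
      (SW2sq (μseq τ (k + 1)).toMeasure (μseq τ k).toMeasure).toReal / (2 * τ)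
          + F (μseq τ (k + 1)) ≤
        (SW2sq ν.toMeasure (μseq τ k).toMeasure).toReal / (2 * τ) + F ν) :
    ∃ (τn : ℕ → ℝ) (μ : ℝ → ProbabilityMeasure (Ed d)),
      (∀ n, 0 < τn n) ∧
      Tendsto τn atTop (𝓝 0) ∧
      (∀ t, MemP2 K (μ t).toMeasure) ∧
      (∃ C : ℝ, 0 ≤ C ∧ ∀ t s,
        SW2 (μ t).toMeasure (μ s).toMeasure ≤ C * |t - s| ^ ((1 : ℝ) / 2)) ∧
      (∀ T ε : ℝ, 0 < ε → ∃ N : ℕ, ∀ n ≥ N, ∀ t ∈ Set.Icc 0 T,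
        SW2 (μseq (τn n) ⌈t / τn n⌉₊).toMeasure (μ t).toMeasure ≤ ε) := by
  have := compactSpace_slicedP2 hK
  let step (n : ℕ) : ℝ := 1 / (n + 1)
  have hstep (n : ℕ) : 0 < step n := Nat.one_div_pos_of_nat
  have hstep_zero : Tendsto step atTop (𝓝 0) := tendsto_one_div_add_atTop_nhds_zero_nat
  let x (n k : ℕ) : SlicedP2 K := ⟨μseq (step n) k, hmem _ (hstep n) k⟩
  have hx (n : ℕ) : IsMinimizingMovement (fun μ => F μ.measure) (step n) (x n) := fun k ν => by
    simpa only [SlicedP2.dist_sq] using hmin _ (hstep n) k ν.measure ν.memP2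
  have hx_zero (n : ℕ) : x n 0 = x 0 0 := by
    simp only [x, hstart _ (hstep _)]
  have hF : BddBelow (Set.range fun μ : SlicedP2 K => F μ.measure) :=
    hFbdd.mono (Set.range_subset_iff.2 fun μ => Set.mem_image_of_mem F μ.memP2)
  obtain ⟨φ, hφ, c, ⟨C, hC, hHolder⟩, hunif⟩ :=
    exists_subseq_tendstoUniformlyOn_of_isMinimizingMovement hF hstep hstep_zero hx_zero hx
  refine ⟨step ∘ φ, fun t => (c t).measure, fun n => hstep _, hstep_zero.comp hφ.tendsto_atTop,
    fun t => (c t).memP2, ⟨C, hC, hHolder⟩, fun T ε hε => ?_⟩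
  obtain ⟨N, hN⟩ := eventually_atTop.1 <|
    Metric.tendstoUniformlyOn_iff.1 (hunif _ (isCompact_Icc (a := 0) (b := T)).totallyBounded) ε hε
  exact ⟨N, fun n hn t ht => (dist_comm _ _).trans_le (hN n hn t ht).le⟩

/-- For K compact, F lower semicontinuous and bounded below, and SW-JKO sequences
started at a fixed μ_0 for each step size τ > 0, there exist step sizes τ_n → 0 and a curve
μ : [0,T] → P_2(K), 1/2-Hölder continuous w.r.t. SW_2, such that the piecewise constant
interpolations μ^{τ_n} converge to μ in SW_2, uniformly in t ∈ [0,T]. -/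
theorem swjko_limit_curve_exists (d : ℕ) (K : Set (Ed d)) (hK : IsCompact K)
    (F : ProbabilityMeasure (Ed d) → ℝ)
    (hFlsc : LowerSemicontinuousOn F {μ : ProbabilityMeasure (Ed d) | MemP2 K μ.toMeasure})
    (hFbdd : BddBelow (F '' {μ : ProbabilityMeasure (Ed d) | MemP2 K μ.toMeasure}))
    (T : ℝ) (hT : 0 < T)
    (μ0 : ProbabilityMeasure (Ed d)) (hμ0 : MemP2 K μ0.toMeasure)
    (μseq : ℝ → ℕ → ProbabilityMeasure (Ed d))
    (hstart : ∀ τ : ℝ, 0 < τ → μseq τ 0 = μ0)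
    (hmem : ∀ τ : ℝ, 0 < τ → ∀ k, MemP2 K (μseq τ k).toMeasure)
    (hmin : ∀ τ : ℝ, 0 < τ → ∀ k, ∀ ν : ProbabilityMeasure (Ed d), MemP2 K ν.toMeasure →
      (SW2sq (μseq τ (k + 1)).toMeasure (μseq τ k).toMeasure).toReal / (2 * τ)
          + F (μseq τ (k + 1)) ≤
        (SW2sq ν.toMeasure (μseq τ k).toMeasure).toReal / (2 * τ) + F ν) :
    ∃ (τn : ℕ → ℝ) (μ : ℝ → ProbabilityMeasure (Ed d)),
      (∀ n, 0 < τn n) ∧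
      Tendsto τn atTop (nhds 0) ∧
      (∀ t ∈ Set.Icc (0 : ℝ) T, MemP2 K (μ t).toMeasure) ∧
      (∃ C : ℝ, 0 ≤ C ∧ ∀ t ∈ Set.Icc (0 : ℝ) T, ∀ s ∈ Set.Icc (0 : ℝ) T,
        SW2 (μ t).toMeasure (μ s).toMeasure ≤ C * |t - s| ^ ((1 : ℝ) / 2)) ∧
      (∀ ε : ℝ, 0 < ε → ∃ N : ℕ, ∀ n ≥ N, ∀ t ∈ Set.Icc (0 : ℝ) T,
        SW2 (μseq (τn n) ⌈t / τn n⌉₊).toMeasure (μ t).toMeasure ≤ ε) := by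
  obtain ⟨τn, μ, hpos, hzero, hmemμ, ⟨C, hC, hHolder⟩, hunif⟩ :=
    swjko_limit_curve_exists_general d K hK F hFbdd μ0 μseq hstart hmem hmin
  exact ⟨τn, μ, hpos, hzero, fun t _ => hmemμ t, ⟨C, hC, fun t _ s _ => hHolder t s⟩, hunif T⟩
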